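/- Let 0 ≤ a < 1, c > 0, 0 ≤ b < c·√(1 − a²), and let y be a 2π-periodic solution of (E) with y(x) > 0 for all x satisfying ∫₀^{2π} (2(b + c·cos x)·y(x) + 3(sin x − a)·y(x)²) dx = 0. Let x* be a point at which y attains its maximum over ℝ. Then ∫_{x*}^{x*+2π} y′(x) · exp( ∫_{x*}^{x} (sin u − a)·y(u)² du ) dx < 0. (Consequently the second derivative of the Poincaré return map at this periodic solution is strictly positive, so the periodic solution has multiplicity exactly two and is lower stable.) -/

import Mathlib

open Real

/-!
Write `A x = b + c cos x` and `B x = sin x - a`, so that `y' = A y² + B y³ = y² (A + B y)`. The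
hypothesis on `b` says that the origin lies inside the ellipse traced by `(A, B)`; hence the
Wronskian `A B' - A' B` is positive. Let `L' = B y²`; non-hyperbolicity makes `L` periodic.

On an arc where `B ≠ 0` the function `u = A / B + y` satisfies `u' = L' u - (A B' - A' B) / B²`, so
`u exp (-L)` decreases and `A + B y` changes sign once on each of the two arcs. Over a period
starting at a suitable `p`, `y` therefore falls to its minimum at some `m` and then rises back.

Match each `t` on the falling branch with the point `σ t` at the same height on the rising branch.
Then `L (σ t) - L t` vanishes at both ends, and its derivative has the sign of the oriented area
`A t B (σ t) - A (σ t) B t`. The angle swept by `(A, B)` between `t` and `σ t` shrinks as `t`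
increases, so this sign passes from negative to positive and `L (σ t) < L t`: in the integral of
`y' exp L` the falling branch outweighs the rising one.
-/

open Set Function MeasureTheory

section Monotonicity

theorem continuousOn_image_of_leftInvOn {X Y : Type*} [TopologicalSpace X] [TopologicalSpace Y]
    [T2Space Y] {f : X → Y} {g : Y → X} {K : Set X} (hK : IsCompact K) (hf : ContinuousOn f K)
    (hg : LeftInvOn g f K) : ContinuousOn g (f '' K) := by
  have : CompactSpace K := isCompact_iff_compactSpace.1 hK
  have hquot : Topology.IsQuotientMap (K.imageFactorization f) :=
    .of_surjective_continuous imageFactorization_surjective (hf.domRestrict.subtype_mk _)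
  rw [continuousOn_iff_continuous_domRestrict, hquot.continuous_iff]
  exact continuous_subtype_val.congr fun x => (hg x.2).symm

theorem neg_of_hasDerivAt_of_forall_lt {f f' : ℝ → ℝ} {p q : ℝ} (hf : ContinuousOn f (Icc p q))
    (hf' : ∀ x ∈ Ioo p q, HasDerivAt f (f' x) x) (hp : f p ≤ 0) (hq : f q ≤ 0)
    (hsign : ∀ s ∈ Ioo p q, ∀ t ∈ Ioo p q, s < t → f' t ≤ 0 → f' s < 0) {x : ℝ}
    (hx : x ∈ Ioo p q) : f x < 0 := by
  by_contra! hfx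
  obtain ⟨s, hs, hs_slope⟩ := exists_hasDerivAt_eq_slope f f' hx.1
    (hf.mono (Icc_subset_Icc_right hx.2.le)) fun u hu => hf' u ⟨hu.1, hu.2.trans hx.2⟩
  obtain ⟨t, ht, ht_slope⟩ := exists_hasDerivAt_eq_slope f f' hx.2
    (hf.mono (Icc_subset_Icc_left hx.1.le)) fun u hu => hf' u ⟨hx.1.trans hu.1, hu.2⟩
  have hs_nonneg : 0 ≤ f' s :=
    hs_slope ▸ div_nonneg (sub_nonneg.2 (hp.trans hfx)) (sub_nonneg.2 hx.1.le)
  have ht_nonpos : f' t ≤ 0 :=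
    ht_slope ▸ div_nonpos_of_nonpos_of_nonneg (sub_nonpos.2 (hq.trans hfx)) (sub_nonneg.2 hx.2.le)
  exact hs_nonneg.not_gt <|
    hsign s ⟨hs.1, hs.2.trans hx.2⟩ t ⟨hx.1.trans ht.1, ht.2⟩ (hs.2.trans ht.1) ht_nonpos

theorem exists_sign_change_of_strictAntiOn_div {w g : ℝ → ℝ} {p q : ℝ} (hpq : p ≤ q)
    (hw : ContinuousOn w (Icc p q)) (hg : ∀ x ∈ Ioo p q, 0 < g x)
    (hanti : StrictAntiOn (fun x => w x / g x) (Ioo p q)) (hp : 0 < w p) (hq : w q < 0) :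
    ∃ z ∈ Ioo p q, (∀ x ∈ Ico p z, 0 < w x) ∧ ∀ x ∈ Ioc z q, w x < 0 := by
  obtain ⟨z, hz, hwz⟩ := intermediate_value_Ioo' hpq hw ⟨hq, hp⟩
  refine ⟨z, hz, fun x hx => ?_, fun x hx => ?_⟩
  · rcases hx.1.eq_or_lt with rfl | hpx
    · exact hp
    · have hxpq : x ∈ Ioo p q := ⟨hpx, hx.2.trans hz.2⟩
      have hquot : 0 < w x / g x := by simpa [hwz] using hanti hxpq hz hx.2
      exact (div_pos_iff_of_pos_right (hg x hxpq)).1 hquot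
  · rcases hx.2.eq_or_lt with rfl | hxq
    · exact hq
    · have hxpq : x ∈ Ioo p q := ⟨hz.1.trans hx.1, hxq⟩
      have hquot : w x / g x < 0 := by simpa [hwz] using hanti hz hxpq hx.1
      simpa only [zero_mul] using (div_lt_iff₀ (hg x hxpq)).1 hquot

end Monotonicity

theorem periodic_integral_of_integral_eq_zero {f : ℝ → ℝ} {T : ℝ} (hf : Continuous f)
    (hper : Periodic f T) (hzero : ∫ u in (0 : ℝ)..T, f u = 0) (x₀ : ℝ) :
    Periodic (fun x => ∫ u in x₀..x, f u) T := fun x => by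
  simp only
  rw [hper.intervalIntegral_add_eq_add x₀ x fun _ _ => hf.intervalIntegrable _ _,
    hper.intervalIntegral_add_eq x₀ 0, zero_add, hzero, add_zero]

/-- `y`, with derivative `F`, falls strictly on `[p, m]` and rises strictly on `[m, q]` back to its
initial value. -/
structure IsValley (y F : ℝ → ℝ) (p m q : ℝ) : Prop where
  left_lt : p < m
  lt_right : m < q
  hasDerivAt : ∀ x ∈ Icc p q, HasDerivAt y (F x) x
  neg : ∀ x ∈ Ioo p m, F x < 0
  pos : ∀ x ∈ Ioo m q, 0 < F x
  ends : y p = y q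

/-- `σ` sends each point of the falling branch of a valley to the point at the same height on the
rising branch. Its derivative is prescribed in the interior only, as `F m = 0` is allowed. -/
structure IsValleyConjugation (y F σ : ℝ → ℝ) (p m q : ℝ) : Prop where
  continuousOn : ContinuousOn σ (Icc p m)
  map_left : σ p = q
  map_mid : σ m = m
  mapsTo : MapsTo σ (Ioo p m) (Ioo m q)
  comp_eq : ∀ t ∈ Ioo p m, y (σ t) = y t
  hasDerivAt : ∀ t ∈ Ioo p m, HasDerivAt σ (F t / F (σ t)) t

section Valley

variable {y F σ h : ℝ → ℝ} {p m q : ℝ}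

namespace IsValley

theorem continuousOn (hv : IsValley y F p m q) : ContinuousOn y (Icc p q) :=
  HasDerivAt.continuousOn hv.hasDerivAt

theorem strictAntiOn (hv : IsValley y F p m q) : StrictAntiOn y (Icc p m) := by
  have hsub : Icc p m ⊆ Icc p q := Icc_subset_Icc_right hv.lt_right.le
  refine strictAntiOn_of_hasDerivWithinAt_neg (convex_Icc p m) (hv.continuousOn.mono hsub)
    (fun x hx => (hv.hasDerivAt x (hsub (interior_subset hx))).hasDerivWithinAt) ?_
  rw [interior_Icc]
  exact hv.neg

theorem strictMonoOn (hv : IsValley y F p m q) : StrictMonoOn y (Icc m q) := by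
  have hsub : Icc m q ⊆ Icc p q := Icc_subset_Icc_left hv.left_lt.le
  refine strictMonoOn_of_hasDerivWithinAt_pos (convex_Icc m q) (hv.continuousOn.mono hsub)
    (fun x hx => (hv.hasDerivAt x (hsub (interior_subset hx))).hasDerivWithinAt) ?_
  rw [interior_Icc]
  exact hv.pos

theorem mapsTo_Icc (hv : IsValley y F p m q) : MapsTo y (Icc p m) (Icc (y m) (y q)) :=
  hv.ends ▸ hv.strictAntiOn.antitoneOn.mapsTo_Icc

theorem mapsTo_Ioo (hv : IsValley y F p m q) : MapsTo y (Ioo p m) (Ioo (y m) (y q)) :=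
  hv.ends ▸ hv.strictAntiOn.mapsTo_Ioo

theorem image_Icc (hv : IsValley y F p m q) : y '' Icc m q = Icc (y m) (y q) :=
  (hv.continuousOn.mono (Icc_subset_Icc_left hv.left_lt.le)).image_Icc_of_monotoneOn
    hv.lt_right.le hv.strictMonoOn.monotoneOn

theorem exists_rightBranch_inverse (hv : IsValley y F p m q) :
    ∃ g : ℝ → ℝ, ContinuousOn g (Icc (y m) (y q)) ∧ LeftInvOn g y (Icc m q) ∧
      ∀ v ∈ Ioo (y m) (y q), g v ∈ Ioo m q ∧ y (g v) = v ∧ HasDerivAt g (F (g v))⁻¹ v := by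
  have hleft := hv.strictMonoOn.injOn.leftInvOn_invFunOn
  set g := invFunOn y (Icc m q)
  have hg : ContinuousOn g (Icc (y m) (y q)) := hv.image_Icc ▸ continuousOn_image_of_leftInvOn
    isCompact_Icc (hv.continuousOn.mono (Icc_subset_Icc_left hv.left_lt.le)) hleft
  have hright : RightInvOn g y (Icc (y m) (y q)) := by
    rw [← hv.image_Icc]
    exact hleft.rightInvOn_image
  refine ⟨g, hg, hleft, fun v hvIoo => ?_⟩
  obtain ⟨x, hx, rfl⟩ : v ∈ y '' Icc m q := hv.image_Icc ▸ Ioo_subset_Icc_self hvIoo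
  have hm : m ∈ Icc m q := left_mem_Icc.2 hv.lt_right.le
  have hq : q ∈ Icc m q := right_mem_Icc.2 hv.lt_right.le
  have hxIoo : x ∈ Ioo m q :=
    ⟨(hv.strictMonoOn.lt_iff_lt hm hx).1 hvIoo.1, (hv.strictMonoOn.lt_iff_lt hx hq).1 hvIoo.2⟩
  have hnhds : Icc (y m) (y q) ∈ nhds (y x) := Icc_mem_nhds hvIoo.1 hvIoo.2
  have hgx : g (y x) = x := hleft hx
  refine ⟨hgx.symm ▸ hxIoo, congrArg y hgx, ?_⟩
  refine .of_local_left_inverse (hg.continuousAt hnhds) ?_ ?_ (Filter.mem_of_superset hnhds hright)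
  · exact hv.hasDerivAt _ (by rw [hgx]; exact Icc_subset_Icc_left hv.left_lt.le hx)
  · exact (hgx.symm ▸ hv.pos x hxIoo).ne'

theorem exists_conjugation (hv : IsValley y F p m q) :
    ∃ σ, IsValleyConjugation y F σ p m q := by
  obtain ⟨g, hg, hleft, hIoo⟩ := hv.exists_rightBranch_inverse
  have hsub : Icc p m ⊆ Icc p q := Icc_subset_Icc_right hv.lt_right.le
  refine ⟨g ∘ y, ?_, ?_, ?_, ?_, ?_, ?_⟩
  · exact hg.comp (hv.continuousOn.mono hsub) hv.mapsTo_Icc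
  · exact (congrArg g hv.ends).trans (hleft (right_mem_Icc.2 hv.lt_right.le))
  · exact hleft (left_mem_Icc.2 hv.lt_right.le)
  · exact fun t ht => (hIoo _ (hv.mapsTo_Ioo ht)).1
  · exact fun t ht => (hIoo _ (hv.mapsTo_Ioo ht)).2.1
  · intro t ht
    exact ((hIoo _ (hv.mapsTo_Ioo ht)).2.2.comp t
      (hv.hasDerivAt t (hsub (Ioo_subset_Icc_self ht)))).congr_deriv (inv_mul_eq_div _ _)

end IsValley

namespace IsValleyConjugation

theorem deriv_neg (hσ : IsValleyConjugation y F σ p m q) (hv : IsValley y F p m q) {t : ℝ}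
    (ht : t ∈ Ioo p m) : F t / F (σ t) < 0 :=
  div_neg_of_neg_of_pos (hv.neg t ht) (hv.pos _ (hσ.mapsTo ht))

theorem strictAntiOn (hσ : IsValleyConjugation y F σ p m q) (hv : IsValley y F p m q) :
    StrictAntiOn σ (Icc p m) := by
  refine strictAntiOn_of_hasDerivWithinAt_neg (f' := fun t => F t / F (σ t)) (convex_Icc p m)
    hσ.continuousOn ?_ ?_ <;> rw [interior_Icc]
  · exact fun t ht => (hσ.hasDerivAt t ht).hasDerivWithinAt
  · exact fun t ht => hσ.deriv_neg hv ht

theorem mapsTo_Icc (hσ : IsValleyConjugation y F σ p m q) (hv : IsValley y F p m q) :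
    MapsTo σ (Icc p m) (Icc m q) := by
  simpa only [hσ.map_left, hσ.map_mid] using (hσ.strictAntiOn hv).antitoneOn.mapsTo_Icc

theorem integral_right_eq (hσ : IsValleyConjugation y F σ p m q) (hv : IsValley y F p m q) :
    ∫ x in m..q, F x * h x = -∫ t in p..m, F t * h (σ t) := by
  have hpm := hv.left_lt.le
  have hsubst := intervalIntegral.integral_comp_mul_deriv_of_deriv_nonpos (a := p) (b := m)
    (f := σ) (f' := fun t => F t / F (σ t)) (g := fun x => F x * h x)
    (by rw [uIcc_of_le hpm]; exact hσ.continuousOn)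
    (by rw [min_eq_left hpm, max_eq_right hpm]; exact hσ.hasDerivAt)
    (by rw [min_eq_left hpm, max_eq_right hpm]; exact fun t ht => (hσ.deriv_neg hv ht).le)
  rw [hσ.map_left, hσ.map_mid] at hsubst
  rw [intervalIntegral.integral_symm, ← hsubst]
  congr 1
  refine intervalIntegral.integral_congr_Ioo_of_le hpm fun t ht => ?_
  have hF : F (σ t) ≠ 0 := (hv.pos _ (hσ.mapsTo ht)).ne'
  simp only [comp_apply]
  field_simp

theorem integral_mul_neg (hσ : IsValleyConjugation y F σ p m q) (hv : IsValley y F p m q)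
    (hF : ContinuousOn F (Icc p q)) (hh : ContinuousOn h (Icc p q))
    (hlt : ∀ t ∈ Ioo p m, h (σ t) < h t) : ∫ x in p..q, F x * h x < 0 := by
  have hpm := hv.left_lt.le
  have hmq := hv.lt_right.le
  have hleft : Icc p m ⊆ Icc p q := Icc_subset_Icc_right hmq
  have hright : Icc m q ⊆ Icc p q := Icc_subset_Icc_left hpm
  have hint_left : IntervalIntegrable (fun x => F x * h x) volume p m :=
    ((hF.mul hh).mono hleft).intervalIntegrable_of_Icc hpm
  have hint_right : IntervalIntegrable (fun x => F x * h x) volume m q :=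
    ((hF.mul hh).mono hright).intervalIntegrable_of_Icc hmq
  have hint_comp : IntervalIntegrable (fun t => F t * h (σ t)) volume p m :=
    ((hF.mono hleft).mul (hh.comp hσ.continuousOn
      ((hσ.mapsTo_Icc hv).mono_right hright))).intervalIntegrable_of_Icc hpm
  have hgap : 0 < ∫ t in p..m, (F t * h (σ t) - F t * h t) :=
    intervalIntegral.intervalIntegral_pos_of_pos_on (hint_comp.sub hint_left)
      (fun t ht => sub_pos.2 (mul_lt_mul_of_neg_left (hlt t ht) (hv.neg t ht))) hv.left_lt
  rw [intervalIntegral.integral_sub hint_comp hint_left] at hgap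
  rw [← intervalIntegral.integral_add_adjacent_intervals hint_left hint_right,
    hσ.integral_right_eq hv]
  linarith

end IsValleyConjugation

end Valley

/-- The oriented area spanned by the points of parameters `s` and `t` on the curve `(A, B)`. -/
def planarCross (A B : ℝ → ℝ) (s t : ℝ) : ℝ :=
  A s * B t - A t * B s

section AbelValley

variable {A B y L σ : ℝ → ℝ} {p m q : ℝ}

namespace IsValleyConjugation

theorem hasDerivAt_comp_sub
    (hσ : IsValleyConjugation y (fun x => y x ^ 2 * (A x + B x * y x)) σ p m q)
    (hv : IsValley y (fun x => y x ^ 2 * (A x + B x * y x)) p m q)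
    (hL : ∀ x, HasDerivAt L (B x * y x ^ 2) x) {t : ℝ} (ht : t ∈ Ioo p m) :
    HasDerivAt (fun t => L (σ t) - L t)
      (y t ^ 2 * planarCross A B t (σ t) / (A (σ t) + B (σ t) * y (σ t))) t := by
  refine (((hL (σ t)).comp t (hσ.hasDerivAt t ht)).sub (hL t)).congr_deriv ?_
  obtain ⟨hyt, hfactor⟩ := mul_ne_zero_iff.1 (hv.pos _ (hσ.mapsTo ht)).ne'
  rw [hσ.comp_eq t ht] at hyt hfactor ⊢
  rw [planarCross]
  field_simp
  ring

theorem comp_lt (hσ : IsValleyConjugation y (fun x => y x ^ 2 * (A x + B x * y x)) σ p m q)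
    (hv : IsValley y (fun x => y x ^ 2 * (A x + B x * y x)) p m q)
    (hL : ∀ x, HasDerivAt L (B x * y x ^ 2) x) (hLends : L p = L q)
    (hnest : ∀ s' s t t', p < s' → s' < s → s < t → t < t' → t' < q →
      planarCross A B s t ≤ 0 → planarCross A B s' t' < 0) {t : ℝ} (ht : t ∈ Ioo p m) :
    L (σ t) < L t := by
  have hLc : Continuous L := continuous_iff_continuousAt.2 fun x => (hL x).continuousAt
  have hfactor : ∀ t ∈ Ioo p m, 0 < A (σ t) + B (σ t) * y (σ t) := fun t ht =>
    pos_of_mul_pos_right (hv.pos _ (hσ.mapsTo ht)) (sq_nonneg _)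
  have hysq : ∀ t ∈ Ioo p m, 0 < y t ^ 2 := fun t ht =>
    (sq_nonneg (y t)).lt_of_ne' (mul_ne_zero_iff.1 (hv.neg t ht).ne).1
  refine sub_neg.1 <| neg_of_hasDerivAt_of_forall_lt (f := fun t => L (σ t) - L t)
    ((hLc.comp_continuousOn hσ.continuousOn).sub hLc.continuousOn)
    (fun t ht => hσ.hasDerivAt_comp_sub hv hL ht)
    (by simp [hσ.map_left, hLends]) (by simp [hσ.map_mid]) ?_ ht
  intro s hs t ht hst hle
  have hcross : planarCross A B t (σ t) ≤ 0 := by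
    rw [div_le_iff₀ (hfactor t ht), zero_mul] at hle
    exact nonpos_of_mul_nonpos_right hle (hysq t ht)
  have hσst : σ t < σ s :=
    hσ.strictAntiOn hv (Ioo_subset_Icc_self hs) (Ioo_subset_Icc_self ht) hst
  refine div_neg_of_neg_of_pos (mul_neg_of_pos_of_neg (hysq s hs) ?_) (hfactor s hs)
  exact hnest s t (σ t) (σ s) hs.1 hst (ht.2.trans (hσ.mapsTo ht).1) hσst (hσ.mapsTo hs).2 hcross

end IsValleyConjugation

end AbelValley

/-- `y` solves the Abel equation `y' = A y² + B y³` on the whole line. -/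
def IsAbelSolution (A B y : ℝ → ℝ) : Prop :=
  ∀ x, HasDerivAt y (A x * y x ^ 2 + B x * y x ^ 3) x

namespace IsAbelSolution

variable {A B y L : ℝ → ℝ} {p m q : ℝ}

theorem continuous (hsol : IsAbelSolution A B y) : Continuous y :=
  continuous_iff_continuousAt.2 fun x => (hsol x).continuousAt

theorem integral_cubic_eq_zero (hsol : IsAbelSolution A B y) (hA : Continuous A)
    (hB : Continuous B) (hy : ∀ x, y x ≠ 0) (hends : y p = y q)
    (hcrit : ∫ x in p..q, (2 * A x * y x + 3 * B x * y x ^ 2) = 0) :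
    ∫ x in p..q, B x * y x ^ 2 = 0 := by
  have hyc := hsol.continuous
  have hlog_deriv : ∀ x, HasDerivAt (fun x => log (y x)) (A x * y x + B x * y x ^ 2) x :=
    fun x => ((hsol x).log (hy x)).congr_deriv (by have := hy x; field_simp)
  have hlog : ∫ x in p..q, (A x * y x + B x * y x ^ 2) = 0 := by
    rw [intervalIntegral.integral_eq_sub_of_hasDerivAt (fun x _ => hlog_deriv x)
      (Continuous.intervalIntegrable (by fun_prop) _ _), hends, sub_self]
  calc ∫ x in p..q, B x * y x ^ 2
      = ∫ x in p..q, ((2 * A x * y x + 3 * B x * y x ^ 2) -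
          2 * (A x * y x + B x * y x ^ 2)) := by congr 1; ext x; ring
    _ = 0 := by
      rw [intervalIntegral.integral_sub (Continuous.intervalIntegrable (by fun_prop) _ _)
        (Continuous.intervalIntegrable (by fun_prop) _ _), intervalIntegral.integral_const_mul,
        hcrit, hlog, mul_zero, sub_zero]

theorem strictAntiOn_div_mul_exp (hsol : IsAbelSolution A B y) {A' B' : ℝ → ℝ} {s : Set ℝ}
    (hs : Convex ℝ s) (hA : ∀ x ∈ s, HasDerivAt A (A' x) x)
    (hB : ∀ x ∈ s, HasDerivAt B (B' x) x) (hL : ∀ x ∈ s, HasDerivAt L (B x * y x ^ 2) x)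
    (hwronskian : ∀ x ∈ s, 0 < A x * B' x - A' x * B x) (hB0 : ∀ x ∈ s, B x ≠ 0) :
    StrictAntiOn (fun x => (A x + B x * y x) / (B x * exp (L x))) s := by
  have hderiv : ∀ x ∈ s, HasDerivAt (fun x => (A x + B x * y x) / (B x * exp (L x)))
      (-((A x * B' x - A' x * B x) / (B x ^ 2 * exp (L x)))) x := by
    intro x hx
    have hBx := hB0 x hx
    refine (((hA x hx).add ((hB x hx).mul (hsol x))).div ((hB x hx).mul (hL x hx).exp)
      (by simp [hBx, exp_ne_zero])).congr_deriv ?_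
    simp only [Pi.add_apply, Pi.mul_apply]
    field_simp
    ring
  refine strictAntiOn_of_hasDerivWithinAt_neg hs (HasDerivAt.continuousOn hderiv)
    (fun x hx => (hderiv x (interior_subset hx)).hasDerivWithinAt) fun x hx => ?_
  have hpos := hwronskian x (interior_subset hx)
  have hBx := hB0 x (interior_subset hx)
  rw [neg_lt_zero]
  positivity

theorem isValley (hsol : IsAbelSolution A B y) (hy : ∀ x, y x ≠ 0) (hpm : p < m) (hmq : m < q)
    (hneg : ∀ x ∈ Ioo p m, A x + B x * y x < 0) (hpos : ∀ x ∈ Ioo m q, 0 < A x + B x * y x)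
    (hends : y p = y q) : IsValley y (fun x => y x ^ 2 * (A x + B x * y x)) p m q where
  left_lt := hpm
  lt_right := hmq
  hasDerivAt x _ := (hsol x).congr_deriv (by ring)
  neg x hx := mul_neg_of_pos_of_neg (sq_pos_of_ne_zero (hy x)) (hneg x hx)
  pos x hx := mul_pos (sq_pos_of_ne_zero (hy x)) (hpos x hx)
  ends := hends

theorem integral_deriv_mul_exp_neg (hsol : IsAbelSolution A B y) (hA : Continuous A)
    (hB : Continuous B) (hL : ∀ x, HasDerivAt L (B x * y x ^ 2) x)
    (hLends : L p = L q) (hv : IsValley y (fun x => y x ^ 2 * (A x + B x * y x)) p m q)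
    (hnest : ∀ s' s t t', p < s' → s' < s → s < t → t < t' → t' < q →
      planarCross A B s t ≤ 0 → planarCross A B s' t' < 0) :
    ∫ x in p..q, deriv y x * exp (L x) < 0 := by
  have hyc := hsol.continuous
  have hLc : Continuous L := continuous_iff_continuousAt.2 fun x => (hL x).continuousAt
  have hderiv : ∀ x, deriv y x = y x ^ 2 * (A x + B x * y x) := fun x => by
    rw [(hsol x).deriv]; ring
  obtain ⟨σ, hσ⟩ := hv.exists_conjugation
  simp only [hderiv]
  exact hσ.integral_mul_neg hv (by fun_prop) (by fun_prop) fun t ht =>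
    exp_lt_exp.2 (hσ.comp_lt hv hL hLends hnest ht)

end IsAbelSolution

/-- First coordinate of the ellipse `x ↦ (b + c cos x, sin x - a)`, the quadratic coefficient of
the Abel equation. -/
noncomputable def ellipseX (b c x : ℝ) : ℝ :=
  b + c * cos x

/-- Second coordinate of the ellipse `x ↦ (b + c cos x, sin x - a)`, the cubic coefficient of the
Abel equation. -/
noncomputable def ellipseY (a x : ℝ) : ℝ :=
  sin x - a

section Ellipse

variable {a b c : ℝ}

theorem continuous_ellipseX : Continuous (ellipseX b c) := by
  unfold ellipseX; fun_prop

theorem continuous_ellipseY : Continuous (ellipseY a) := by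
  unfold ellipseY; fun_prop

theorem hasDerivAt_ellipseX (x : ℝ) : HasDerivAt (ellipseX b c) (c * -sin x) x :=
  ((hasDerivAt_cos x).const_mul c).const_add b

theorem hasDerivAt_ellipseY (x : ℝ) : HasDerivAt (ellipseY a) (cos x) x :=
  (hasDerivAt_sin x).sub_const a

theorem periodic_ellipseX : Periodic (ellipseX b c) (2 * π) := fun x => by
  rw [ellipseX, ellipseX, cos_add_two_pi]

theorem periodic_ellipseY : Periodic (ellipseY a) (2 * π) := fun x => by
  rw [ellipseY, ellipseY, sin_add_two_pi]

theorem ellipseX_pi_sub (x : ℝ) : ellipseX b c (π - x) = -ellipseX (-b) c x := by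
  rw [ellipseX, ellipseX, cos_pi_sub]
  ring

theorem ellipseY_pi_sub (x : ℝ) : ellipseY a (π - x) = ellipseY a x := by
  rw [ellipseY, ellipseY, sin_pi_sub]

theorem ellipseY_pos {x : ℝ} (hx : x ∈ Ioo (arcsin a) (π - arcsin a)) : 0 < ellipseY a x := by
  have hlower := neg_pi_div_two_le_arcsin a
  refine sub_pos.2 ?_
  rcases le_total x (π / 2) with h | h
  · exact (arcsin_lt_iff_lt_sin' ⟨hlower.trans_lt hx.1, h⟩).1 hx.1
  · rw [← sin_pi_sub]
    exact (arcsin_lt_iff_lt_sin' ⟨by linarith [hx.2], by linarith⟩).1 (by linarith [hx.2])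

theorem ellipseY_neg {x : ℝ} (hx : x ∈ Ioo (π - arcsin a) (arcsin a + 2 * π)) :
    ellipseY a x < 0 := by
  have hupper := arcsin_le_pi_div_two a
  refine sub_neg.2 ?_
  rcases le_total x (3 * π / 2) with h | h
  · rw [← sin_pi_sub]
    exact (lt_arcsin_iff_sin_lt' ⟨by linarith, by linarith [hx.1]⟩).1 (by linarith [hx.1])
  · rw [← sin_sub_two_pi]
    exact (lt_arcsin_iff_sin_lt' ⟨by linarith, by linarith [hx.2]⟩).1 (by linarith [hx.2])

theorem pos_of_abs_lt_mul_sqrt (hb : |b| < c * √(1 - a ^ 2)) : 0 < c :=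
  pos_of_mul_pos_left ((abs_nonneg b).trans_lt hb) (sqrt_nonneg _)

theorem abs_lt_one_of_abs_lt_mul_sqrt (hb : |b| < c * √(1 - a ^ 2)) : |a| < 1 := by
  have hsqrt : 0 < √(1 - a ^ 2) :=
    pos_of_mul_pos_right ((abs_nonneg b).trans_lt hb) (pos_of_abs_lt_mul_sqrt hb).le
  rw [← sq_lt_one_iff_abs_lt_one]
  exact sub_pos.1 (sqrt_pos.1 hsqrt)

theorem ellipseX_arcsin_pos (hb : |b| < c * √(1 - a ^ 2)) : 0 < ellipseX b c (arcsin a) := by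
  rw [ellipseX, cos_arcsin]
  linarith [neg_abs_le b]

theorem ellipseX_pi_sub_arcsin_neg (hb : |b| < c * √(1 - a ^ 2)) :
    ellipseX b c (π - arcsin a) < 0 := by
  rw [ellipseX_pi_sub, neg_lt_zero]
  exact ellipseX_arcsin_pos (by rwa [abs_neg])

theorem ellipseY_arcsin (ha : |a| < 1) : ellipseY a (arcsin a) = 0 := by
  rw [ellipseY, sin_arcsin (abs_lt.1 ha).1.le (abs_lt.1 ha).2.le, sub_self]

theorem ellipse_wronskian_eq (x : ℝ) :
    ellipseX b c x * cos x - c * -sin x * ellipseY a x = c + (b * cos x - a * c * sin x) := by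
  rw [ellipseX, ellipseY]
  linear_combination c * sin_sq_add_cos_sq x

theorem ellipse_wronskian_pos (hb : |b| < c * √(1 - a ^ 2)) (x : ℝ) :
    0 < c + (b * cos x - a * c * sin x) := by
  have hc := pos_of_abs_lt_mul_sqrt hb
  have ha : a ^ 2 < 1 := (sq_lt_one_iff_abs_lt_one a).2 (abs_lt_one_of_abs_lt_mul_sqrt hb)
  have hinside : b ^ 2 + (a * c) ^ 2 < c ^ 2 := by
    have hsq : |b| ^ 2 < (c * √(1 - a ^ 2)) ^ 2 := pow_lt_pow_left₀ hb (abs_nonneg b) two_ne_zero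
    rw [sq_abs, mul_pow, sq_sqrt (sub_nonneg.2 ha.le)] at hsq
    linarith
  have hamplitude : (b * cos x - a * c * sin x) ^ 2 ≤ b ^ 2 + (a * c) ^ 2 := by
    have hpyth : (b * cos x - a * c * sin x) ^ 2 + (b * sin x + a * c * cos x) ^ 2 =
        b ^ 2 + (a * c) ^ 2 := by
      linear_combination (b ^ 2 + (a * c) ^ 2) * sin_sq_add_cos_sq x
    linarith [sq_nonneg (b * sin x + a * c * cos x)]
  linarith [(abs_lt.1 (abs_lt_of_sq_lt_sq (hamplitude.trans_lt hinside) hc.le)).1]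

theorem planarCross_ellipse (s t : ℝ) :
    planarCross (ellipseX b c) (ellipseY a) s t = 2 * sin ((t - s) / 2) *
      ((c + (b * cos s - a * c * sin s)) * cos ((t - s) / 2) +
        -(b * sin s + a * c * cos s) * sin ((t - s) / 2)) := by
  obtain ⟨τ, rfl⟩ : ∃ τ, t = s + 2 * τ := ⟨(t - s) / 2, by ring⟩
  rw [planarCross, ellipseX, ellipseX, ellipseY, ellipseY, add_sub_cancel_left,
    mul_div_cancel_left₀ τ two_ne_zero, sin_add, cos_add, sin_two_mul, cos_two_mul']
  linear_combination (b * sin s + a * c * cos s) * sin_sq_add_cos_sq τ +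
    2 * c * sin τ * cos τ * sin_sq_add_cos_sq s

-- Divided by `sin τ`, the expression is `D cot τ + E`, and `cot` decreases on `(0, π)`.
theorem mul_cos_add_mul_sin_neg {D E τ τ' : ℝ} (hD : 0 < D) (hτ : 0 < τ) (hττ' : τ < τ')
    (hτ' : τ' < π) (h : D * cos τ + E * sin τ ≤ 0) : D * cos τ' + E * sin τ' < 0 := by
  have hsin : 0 < sin τ := sin_pos_of_pos_of_lt_pi hτ (hττ'.trans hτ')
  have hsin' : 0 < sin τ' := sin_pos_of_pos_of_lt_pi (hτ.trans hττ') hτ'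
  have hdiff : 0 < sin (τ' - τ) := sin_pos_of_pos_of_lt_pi (by linarith) (by linarith)
  have hshift : sin τ * (D * cos τ' + E * sin τ') =
      sin τ' * (D * cos τ + E * sin τ) - D * sin (τ' - τ) := by
    rw [sin_sub]; ring
  refine neg_of_mul_neg_right ?_ hsin.le
  rw [hshift]
  linarith [mul_nonpos_of_nonneg_of_nonpos hsin'.le h, mul_pos hD hdiff]

theorem planarCross_ellipse_neg_of_lt_right (hb : |b| < c * √(1 - a ^ 2)) {s t t' : ℝ}
    (hst : s < t) (htt' : t < t') (ht' : t' < s + 2 * π)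
    (h : planarCross (ellipseX b c) (ellipseY a) s t ≤ 0) :
    planarCross (ellipseX b c) (ellipseY a) s t' < 0 := by
  rw [planarCross_ellipse] at h ⊢
  have hsin : ∀ u, s < u → u < s + 2 * π → 0 < 2 * sin ((u - s) / 2) := fun u hsu hu =>
    mul_pos two_pos (sin_pos_of_pos_of_lt_pi (by linarith) (by linarith))
  exact mul_neg_of_pos_of_neg (hsin t' (hst.trans htt') ht') <|
    mul_cos_add_mul_sin_neg (ellipse_wronskian_pos hb s) (by linarith) (by linarith) (by linarith)
      (nonpos_of_mul_nonpos_right h (hsin t hst (htt'.trans ht')))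

theorem planarCross_ellipse_reflect (s t : ℝ) :
    planarCross (ellipseX b c) (ellipseY a) s t =
      planarCross (ellipseX (-b) c) (ellipseY a) (π - t) (π - s) := by
  simp only [planarCross, ellipseX_pi_sub, ellipseY_pi_sub, neg_neg]
  ring

theorem planarCross_ellipse_neg_of_lt_left (hb : |b| < c * √(1 - a ^ 2)) {s' s t : ℝ}
    (hs's : s' < s) (hst : s < t) (ht : t < s' + 2 * π)
    (h : planarCross (ellipseX b c) (ellipseY a) s t ≤ 0) :
    planarCross (ellipseX b c) (ellipseY a) s' t < 0 := by
  rw [← abs_neg] at hb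
  rw [planarCross_ellipse_reflect] at h ⊢
  exact planarCross_ellipse_neg_of_lt_right hb (by linarith) (by linarith) (by linarith) h

theorem planarCross_ellipse_neg_of_nested (hb : |b| < c * √(1 - a ^ 2)) {s' s t t' : ℝ}
    (hs's : s' < s) (hst : s < t) (htt' : t < t') (ht' : t' < s' + 2 * π)
    (h : planarCross (ellipseX b c) (ellipseY a) s t ≤ 0) :
    planarCross (ellipseX b c) (ellipseY a) s' t' < 0 :=
  planarCross_ellipse_neg_of_lt_left hb hs's (hst.trans htt') ht' <|
    (planarCross_ellipse_neg_of_lt_right hb hst htt' (by linarith) h).le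

end Ellipse

section EllipseSolution

variable {a b c : ℝ} {y L : ℝ → ℝ} {s : Set ℝ}

namespace IsAbelSolution

theorem strictAntiOn_ellipse (hsol : IsAbelSolution (ellipseX b c) (ellipseY a) y)
    (hb : |b| < c * √(1 - a ^ 2)) (hL : ∀ x, HasDerivAt L (ellipseY a x * y x ^ 2) x)
    (hs : Convex ℝ s) (hY : ∀ x ∈ s, ellipseY a x ≠ 0) :
    StrictAntiOn
      (fun x => (ellipseX b c x + ellipseY a x * y x) / (ellipseY a x * exp (L x))) s :=
  hsol.strictAntiOn_div_mul_exp hs (fun x _ => hasDerivAt_ellipseX x)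
    (fun x _ => hasDerivAt_ellipseY x) (fun x _ => hL x)
    (fun x _ => by rw [ellipse_wronskian_eq]; exact ellipse_wronskian_pos hb x) hY

theorem exists_factor_sign_change_upper (hsol : IsAbelSolution (ellipseX b c) (ellipseY a) y)
    (hb : |b| < c * √(1 - a ^ 2)) (hL : ∀ x, HasDerivAt L (ellipseY a x * y x ^ 2) x) :
    ∃ p ∈ Ioo (arcsin a) (π - arcsin a),
      (∀ x ∈ Ico (arcsin a) p, 0 < ellipseX b c x + ellipseY a x * y x) ∧
        ∀ x ∈ Ioc p (π - arcsin a), ellipseX b c x + ellipseY a x * y x < 0 := by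
  have hY := ellipseY_arcsin (abs_lt_one_of_abs_lt_mul_sqrt hb)
  have hcont : Continuous fun x => ellipseX b c x + ellipseY a x * y x :=
    continuous_ellipseX.add (continuous_ellipseY.mul hsol.continuous)
  refine exists_sign_change_of_strictAntiOn_div (g := fun x => ellipseY a x * exp (L x))
    (by linarith [arcsin_le_pi_div_two a]) hcont.continuousOn
    (fun x hx => mul_pos (ellipseY_pos hx) (exp_pos _))
    (hsol.strictAntiOn_ellipse hb hL (convex_Ioo _ _) fun x hx => (ellipseY_pos hx).ne') ?_ ?_
  · rw [hY, zero_mul, add_zero]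
    exact ellipseX_arcsin_pos hb
  · rw [ellipseY_pi_sub, hY, zero_mul, add_zero]
    exact ellipseX_pi_sub_arcsin_neg hb

theorem exists_factor_sign_change_lower (hsol : IsAbelSolution (ellipseX b c) (ellipseY a) y)
    (hb : |b| < c * √(1 - a ^ 2)) (hL : ∀ x, HasDerivAt L (ellipseY a x * y x ^ 2) x) :
    ∃ m ∈ Ioo (π - arcsin a) (arcsin a + 2 * π),
      (∀ x ∈ Ico (π - arcsin a) m, ellipseX b c x + ellipseY a x * y x < 0) ∧
        ∀ x ∈ Ioc m (arcsin a + 2 * π), 0 < ellipseX b c x + ellipseY a x * y x := by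
  have hY := ellipseY_arcsin (abs_lt_one_of_abs_lt_mul_sqrt hb)
  have hcont : Continuous fun x => ellipseX b c x + ellipseY a x * y x :=
    continuous_ellipseX.add (continuous_ellipseY.mul hsol.continuous)
  have hanti := hsol.strictAntiOn_ellipse hb hL (convex_Ioo (π - arcsin a) (arcsin a + 2 * π))
    fun x hx => (ellipseY_neg hx).ne
  simpa only [neg_pos, neg_lt_zero] using exists_sign_change_of_strictAntiOn_div
    (w := fun x => -(ellipseX b c x + ellipseY a x * y x))
    (g := fun x => -(ellipseY a x * exp (L x)))
    (by linarith [neg_pi_div_two_le_arcsin a]) hcont.neg.continuousOn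
    (fun x hx => neg_pos.2 (mul_neg_of_neg_of_pos (ellipseY_neg hx) (exp_pos _)))
    (by simpa only [neg_div_neg_eq] using hanti)
    (by
      rw [ellipseY_pi_sub, hY, zero_mul, add_zero, neg_pos]
      exact ellipseX_pi_sub_arcsin_neg hb)
    (by
      rw [periodic_ellipseX, periodic_ellipseY, hY, zero_mul, add_zero, neg_lt_zero]
      exact ellipseX_arcsin_pos hb)

theorem exists_isValley (hsol : IsAbelSolution (ellipseX b c) (ellipseY a) y)
    (hb : |b| < c * √(1 - a ^ 2)) (hper : Periodic y (2 * π)) (hy : ∀ x, y x ≠ 0)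
    (hL : ∀ x, HasDerivAt L (ellipseY a x * y x ^ 2) x) :
    ∃ p m, IsValley y (fun x => y x ^ 2 * (ellipseX b c x + ellipseY a x * y x))
      p m (p + 2 * π) := by
  obtain ⟨p, hp, hupper_pos, hupper_neg⟩ := hsol.exists_factor_sign_change_upper hb hL
  obtain ⟨m, hm, hlower_neg, hlower_pos⟩ := hsol.exists_factor_sign_change_lower hb hL
  refine ⟨p, m, hsol.isValley hy (hp.2.trans hm.1) (by linarith [hp.1, hm.2])
    (fun x hx => ?_) (fun x hx => ?_) (hper p).symm⟩
  · rcases le_total x (π - arcsin a) with h | h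
    · exact hupper_neg x ⟨hx.1, h⟩
    · exact hlower_neg x ⟨h, hx.2⟩
  · rcases le_total x (arcsin a + 2 * π) with h | h
    · exact hlower_pos x ⟨hx.1, h⟩
    · rw [← periodic_ellipseX.sub_eq, ← periodic_ellipseY.sub_eq, ← hper.sub_eq]
      exact hupper_pos _ ⟨by linarith, by linarith [hx.2]⟩

end IsAbelSolution

end EllipseSolution

theorem abel_semistable_integral_neg_general {a b c : ℝ} (hb : |b| < c * √(1 - a ^ 2))
    {y : ℝ → ℝ} (hsol : IsAbelSolution (fun x => b + c * cos x) (fun x => sin x - a) y)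
    (hper : Periodic y (2 * π)) (hy : ∀ x, y x ≠ 0)
    (hcrit : ∫ x in (0 : ℝ)..(2 * π),
      (2 * (b + c * cos x) * y x + 3 * (sin x - a) * y x ^ 2) = 0) (x₀ : ℝ) :
    ∫ x in x₀..(x₀ + 2 * π), deriv y x * exp (∫ u in x₀..x, (sin u - a) * y u ^ 2) < 0 := by
  change IsAbelSolution (ellipseX b c) (ellipseY a) y at hsol
  set L : ℝ → ℝ := fun x => ∫ u in x₀..x, ellipseY a u * y u ^ 2
  have hrate : Continuous fun x => ellipseY a x * y x ^ 2 :=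
    continuous_ellipseY.mul (hsol.continuous.pow 2)
  have hL : ∀ x, HasDerivAt L (ellipseY a x * y x ^ 2) x := fun x =>
    (hrate.integral_hasStrictDerivAt x₀ x).hasDerivAt
  have hLper : Periodic L (2 * π) :=
    periodic_integral_of_integral_eq_zero hrate (periodic_ellipseY.mul (hper.comp (· ^ 2)))
      (hsol.integral_cubic_eq_zero continuous_ellipseX continuous_ellipseY hy
        (by simpa using (hper 0).symm) hcrit) x₀
  have hderiv_per : Periodic (deriv y) (2 * π) := fun x => by
    rw [← deriv_comp_add_const, funext hper]
  obtain ⟨p, m, hv⟩ := hsol.exists_isValley hb hper hy hL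
  calc ∫ x in x₀..(x₀ + 2 * π), deriv y x * exp (L x)
      = ∫ x in p..(p + 2 * π), deriv y x * exp (L x) :=
        (hderiv_per.mul (hLper.comp exp)).intervalIntegral_add_eq x₀ p
    _ < 0 := hsol.integral_deriv_mul_exp_neg continuous_ellipseX continuous_ellipseY hL
      (hLper p).symm hv fun s' s t t' hs' hs's hst htt' ht' =>
        planarCross_ellipse_neg_of_nested hb hs's hst htt' (by linarith)

/-- Key estimate for the multiplicity-two analysis: for `0 ≤ a < 1`, `c > 0`,
`0 ≤ b < c·√(1 − a²)`, if `y` is a positive 2π-periodic solution of the Abel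
equation with `∫₀^{2π}(2(b + c·cos x)·y + 3(sin x − a)·y²) dx = 0`
(non-hyperbolicity) and `x*` is a global maximum point of `y`, then
`∫_{x*}^{x*+2π} y′(x)·exp(∫_{x*}^x (sin u − a)·y(u)² du) dx < 0`;
consequently `G''(y*) > 0`, the periodic solution has multiplicity exactly two
and is lower stable. -/
theorem abel_semistable_integral_neg
    (a b c : ℝ) (ha0 : 0 ≤ a) (ha1 : a < 1) (hc : 0 < c)
    (hb0 : 0 ≤ b) (hb : b < c * Real.sqrt (1 - a ^ 2))
    (y : ℝ → ℝ)
    (hsol : ∀ x : ℝ, HasDerivAt y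
      ((b + c * Real.cos x) * (y x) ^ 2 + (Real.sin x - a) * (y x) ^ 3) x)
    (hper : ∀ x : ℝ, y (x + 2 * Real.pi) = y x)
    (hpos : ∀ x : ℝ, 0 < y x)
    (hcrit : ∫ x in (0:ℝ)..(2 * Real.pi),
      (2 * (b + c * Real.cos x) * y x + 3 * (Real.sin x - a) * (y x) ^ 2) = 0)
    (xstar : ℝ) (hmax : ∀ x : ℝ, y x ≤ y xstar) :
    (∫ x in xstar..(xstar + 2 * Real.pi),
      deriv y x * Real.exp (∫ u in xstar..x, (Real.sin u - a) * (y u) ^ 2)) < 0 := by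
  exact abel_semistable_integral_neg_general (by rwa [abs_of_nonneg hb0]) hsol hper
    (fun x => (hpos x).ne') hcrit xstar
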